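/- Let q be a complex number with |q| < 1 and let a, b, c, d be complex numbers with max{|a|,|b|,|c|,|d|} < 1. Then ∫₀^π h(cos θ; 1, -1, q^{1/2}, -q^{1/2}) / h(cos θ; a, b, c, d) dθ = 2π (abcd; q)_∞ / ((q; q)_∞ (ab; q)_∞ (ac; q)_∞ (ad; q)_∞ (bc; q)_∞ (bd; q)_∞ (cd; q)_∞). (The Askey–Wilson integral.) -/

import Mathlib

open Complex MeasureTheory

/-- The q-shifted factorial `(x; q)_∞ = ∏_{k=0}^∞ (1 - x q^k)`. -/
noncomputable def qp (q x : ℂ) : ℂ := ∏' k : ℕ, (1 - x * q ^ k)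

/-- For `x = cos θ`, `h(x; λ) = (λ e^{iθ}; q)_∞ (λ e^{-iθ}; q)_∞`. -/
noncomputable def hh (q : ℂ) (θ : ℝ) (l : ℂ) : ℂ :=
  qp q (l * Complex.exp ((θ : ℂ) * Complex.I)) *
    qp q (l * Complex.exp (-((θ : ℂ) * Complex.I)))

/-!
Write the weight as `K(z, 1/z)` on the unit circle, where
`K(z, w) = (z²)_∞ (w²)_∞ / ∏ (p z)_∞ (p w)_∞` is symmetric and `p` runs over the parameters.
The function `φ(z) = z K(z, q/z)` is holomorphic on `|q| ≤ |z| ≤ 1`, and `z ↦ q/z` exchanges the two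
boundary circles, so `G(z) = φ(z) - φ(q/z)` has mean zero over the unit circle. The functional
equation of `(x)_∞` shows that `G(z) + G(1/z)` is the weight times an affine function of `z + 1/z`,
and the vanishing of its mean is a first-order recurrence for the integral under `a ↦ q a`. After
division by the expected product the integral is therefore invariant under `a ↦ q a`, hence, letting
`qⁿ a → 0` in each parameter in turn, independent of the parameters. For the parameters
`q, -q, q^{1/2}, -q^{1/2}` the weight collapses to `(1 - z²)(1 - z⁻²)`, whose mean is `2`.
-/

lemma norm_mul_lt_one {x y : ℂ} (hx : ‖x‖ < 1) (hy : ‖y‖ ≤ 1) : ‖x * y‖ < 1 := by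
  rw [norm_mul]
  exact mul_lt_one_of_nonneg_of_lt_one_left (norm_nonneg x) hx hy

lemma one_sub_ne_zero_of_norm_lt_one {x : ℂ} (hx : ‖x‖ < 1) : 1 - x ≠ 0 := by
  intro h
  simp [← sub_eq_zero.1 h] at hx

section QPochhammer

variable {q u : ℂ}

lemma summable_norm_neg_mul_pow (hq : ‖q‖ < 1) (x : ℂ) :
    Summable fun k : ℕ ↦ ‖-(x * q ^ k)‖ := by
  simpa using (summable_geometric_of_lt_one (norm_nonneg q) hq).mul_left ‖x‖

lemma multipliable_one_sub_mul_pow (hq : ‖q‖ < 1) (x : ℂ) :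
    Multipliable fun k : ℕ ↦ 1 - x * q ^ k := by
  simpa [sub_eq_add_neg] using multipliable_one_add_of_summable (summable_norm_neg_mul_pow hq x)

lemma qp_eq_one_sub_mul (hq : ‖q‖ < 1) (x : ℂ) : qp q x = (1 - x) * qp q (q * x) := by
  have tail : (fun k : ℕ ↦ 1 - x * q ^ (k + 1)) = fun k ↦ 1 - q * x * q ^ k := by
    funext k; ring
  have split := tprod_eq_zero_mul' (f := fun k : ℕ ↦ 1 - x * q ^ k)
    (tail ▸ multipliable_one_sub_mul_pow hq (q * x))
  simpa [qp, tail] using split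

lemma qp_one (hq : ‖q‖ < 1) : qp q 1 = 0 := by
  simp [qp_eq_one_sub_mul hq 1]

lemma qp_ne_zero (hq : ‖q‖ < 1) {x : ℂ} (hx : ‖x‖ < 1) : qp q x ≠ 0 := by
  simp only [qp, sub_eq_add_neg]
  refine tprod_one_add_ne_zero_of_summable (fun k ↦ ?_) (summable_norm_neg_mul_pow hq x)
  rw [← sub_eq_add_neg]
  exact one_sub_ne_zero_of_norm_lt_one
    (norm_mul_lt_one hx (norm_pow q k ▸ pow_le_one₀ (norm_nonneg q) hq.le))

lemma differentiable_qp (hq : ‖q‖ < 1) : Differentiable ℂ (qp q) := by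
  intro x
  have locUnif : HasProdLocallyUniformlyOn (fun (k : ℕ) (y : ℂ) ↦ 1 + -(y * q ^ k))
      (fun y ↦ ∏' k : ℕ, (1 + -(y * q ^ k))) (Metric.ball 0 (‖x‖ + 1)) := by
    refine Summable.hasProdLocallyUniformlyOn_nat_one_add Metric.isOpen_ball
      ((summable_geometric_of_lt_one (norm_nonneg q) hq).mul_left (‖x‖ + 1))
      (.of_forall fun k y hy ↦ ?_) (fun k ↦ by fun_prop)
    rw [norm_neg, norm_mul, norm_pow]
    have : ‖y‖ < ‖x‖ + 1 := by simpa using hy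
    gcongr
  have diffOn := locUnif.differentiableOn (.of_forall fun s ↦ by fun_prop) Metric.isOpen_ball
  have qp_eq : qp q = fun y ↦ ∏' k : ℕ, (1 + -(y * q ^ k)) := by
    funext y
    simp only [qp, sub_eq_add_neg]
  exact qp_eq ▸ diffOn.differentiableAt (Metric.isOpen_ball.mem_nhds (by simp))

lemma continuous_qp (hq : ‖q‖ < 1) : Continuous (qp q) := (differentiable_qp hq).continuous

lemma qp_sq (hq : ‖q‖ < 1) (hu : u ^ 2 = q) (z : ℂ) :
    qp q (z ^ 2) = qp q z * qp q (-z) * (qp q (u * z) * qp q (-u * z)) := by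
  have mult := multipliable_one_sub_mul_pow hq
  have even (k : ℕ) : 1 - z ^ 2 * q ^ (2 * k) = (1 - z * q ^ k) * (1 - -z * q ^ k) := by ring
  have odd (k : ℕ) :
      1 - z ^ 2 * q ^ (2 * k + 1) = (1 - u * z * q ^ k) * (1 - -u * z * q ^ k) := by
    rw [← hu]; ring
  simp only [qp]
  rw [← (mult z).tprod_mul (mult (-z)), ← (mult (u * z)).tprod_mul (mult (-u * z)),
    ← tprod_even_mul_odd]
  · simp only [even, odd]
  · simpa only [even] using (mult z).mul (mult (-z))
  · simpa only [odd] using (mult (u * z)).mul (mult (-u * z))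

/-- Euler's identity `(q; q²)_∞ (-q; q)_∞ = 1`. -/
lemma qp_mul_qp_neg_mul_qp_neg_sq (hq : ‖q‖ < 1) (hu : u ^ 2 = q) :
    qp q u * qp q (-u) * qp q (-q) = 1 := by
  have h := qp_sq hq hu u
  rw [← sq, neg_mul, ← sq, hu] at h
  apply mul_right_cancel₀ (qp_ne_zero hq hq)
  linear_combination -h

end QPochhammer

section CircleAverage

open Real (circleAverage)

lemma circleAverage_eq_of_differentiableAt_annulus {E : Type*} [NormedAddCommGroup E]
    [NormedSpace ℂ E] [CompleteSpace E] {f : ℂ → E} {c : ℂ} {r R : ℝ} (hr : 0 ≤ r) (hrR : r ≤ R)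
    (hf : ∀ z, r ≤ ‖z - c‖ → ‖z - c‖ ≤ R → DifferentiableAt ℂ f z) :
    circleAverage f c R = circleAverage f c r := by
  rcases hr.eq_or_lt with rfl | hr
  · have diffCont : DifferentiableOn ℂ f (Metric.closedBall c |R|) := fun z hz ↦
      (hf z (norm_nonneg _) (by simpa [abs_of_nonneg hrR, dist_eq_norm] using hz))
        |>.differentiableWithinAt
    rw [Real.circleAverage_zero,
      (diffCont.mono Metric.closure_ball_subset_closedBall).diffContOnCl.circleAverage]
  · rw [Real.circleAverage_eq_circleIntegral (hr.trans_le hrR).ne',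
      Real.circleAverage_eq_circleIntegral hr.ne',
      circleIntegral_sub_center_inv_smul_eq_of_differentiable_on_annulus_off_countable hr hrR
        Set.countable_empty]
    · intro z hz
      simp only [Set.mem_sdiff, Metric.mem_closedBall, Metric.mem_ball, dist_eq_norm,
        not_lt] at hz
      exact (hf z hz.2 hz.1).continuousAt.continuousWithinAt
    · intro z hz
      simp only [Set.mem_sdiff, Metric.mem_closedBall, Metric.mem_ball, dist_eq_norm,
        not_le] at hz
      exact hf z hz.1.2.le hz.1.1.le

variable {E : Type*} [NormedAddCommGroup E] [NormedSpace ℝ E] {f : ℂ → E}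

lemma circleAverage_comp_const_mul (f : ℂ → E) (a : ℂ) :
    circleAverage (fun z ↦ f (a * z)) 0 1 = circleAverage f 0 ‖a‖ := by
  have rotate (θ : ℝ) : a * circleMap 0 1 θ = circleMap 0 ‖a‖ (θ + a.arg) := by
    conv_lhs => rw [← norm_mul_exp_arg_mul_I a]
    simp only [circleMap, ofReal_one, ofReal_add, add_mul, Complex.exp_add]
    ring
  rw [Real.circleAverage_eq_integral_add (f := f) a.arg, Real.circleAverage_def]
  simp only [rotate]

lemma circleAverage_comp_const_mul_inv (f : ℂ → E) (a : ℂ) :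
    circleAverage (fun z ↦ f (a * z⁻¹)) 0 1 = circleAverage f 0 ‖a‖ :=
  (Real.circleAverage_zero_one_congr_inv (f := fun z ↦ f (a * z))).trans
    (circleAverage_comp_const_mul f a)

lemma integral_zero_pi_circleMap_eq_smul_circleAverage (hf : CircleIntegrable f 0 1)
    (hinv : ∀ z, f z⁻¹ = f z) :
    ∫ θ in (0 : ℝ)..Real.pi, f (circleMap 0 1 θ) = Real.pi • circleAverage f 0 1 := by
  have reflect (θ : ℝ) : f (circleMap 0 1 (2 * Real.pi - θ)) = f (circleMap 0 1 θ) := by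
    rw [sub_eq_neg_add, periodic_circleMap, ← hinv, circleMap_zero_inv, inv_one, neg_neg]
  have upper : ∫ θ in Real.pi..2 * Real.pi, f (circleMap 0 1 θ) =
      ∫ θ in (0 : ℝ)..Real.pi, f (circleMap 0 1 θ) := by
    have h := intervalIntegral.integral_comp_sub_left (a := 0) (b := Real.pi)
      (fun θ ↦ f (circleMap 0 1 θ)) (2 * Real.pi)
    rw [sub_zero, two_mul, add_sub_cancel_right, ← two_mul] at h
    simpa only [reflect] using h.symm
  have hint (a b : ℝ) : IntervalIntegrable (fun θ ↦ f (circleMap 0 1 θ)) volume a b :=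
    ((periodic_circleMap 0 1).comp f).intervalIntegrable₀ Real.two_pi_pos.ne' hf a b
  rw [Real.circleAverage_def, ← intervalIntegral.integral_add_adjacent_intervals
    (hint 0 Real.pi) (hint Real.pi (2 * Real.pi)), upper, ← two_smul ℝ, smul_smul, smul_smul]
  have : Real.pi * (2 * Real.pi)⁻¹ * 2 = 1 := by field_simp
  rw [this, one_smul]

end CircleAverage

section Kernel

variable {ι : Type*} [Fintype ι] {q : ℂ} {p : ι → ℂ}

/-- The two-variable form of the Askey–Wilson weight with parameters `p`, symmetric in `z` and `w`.
The weight itself is its restriction to `w = z⁻¹`; keeping `w` free makes `w ↦ q w` available. -/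
noncomputable def askeyWilsonKernel (q : ℂ) (p : ι → ℂ) (z w : ℂ) : ℂ :=
  qp q (z ^ 2) * qp q (w ^ 2) / ∏ i, qp q (p i * z) * qp q (p i * w)

lemma askeyWilsonKernel_comm (q : ℂ) (p : ι → ℂ) (z w : ℂ) :
    askeyWilsonKernel q p z w = askeyWilsonKernel q p w z := by
  simp only [askeyWilsonKernel, mul_comm]

lemma askeyWilsonKernel_eq_zero_of_sq_eq_one (hq : ‖q‖ < 1) (p : ι → ℂ) {z : ℂ} (hz : z ^ 2 = 1)
    (w : ℂ) : askeyWilsonKernel q p z w = 0 := by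
  simp [askeyWilsonKernel, hz, qp_one hq]

lemma askeyWilsonKernel_denom_ne_zero (hq : ‖q‖ < 1) (hp : ∀ i, ‖p i‖ < 1) {z w : ℂ}
    (hz : ‖z‖ ≤ 1) (hw : ‖w‖ ≤ 1) : ∏ i, qp q (p i * z) * qp q (p i * w) ≠ 0 :=
  Finset.prod_ne_zero_iff.2 fun i _ ↦ mul_ne_zero
    (qp_ne_zero hq (norm_mul_lt_one (hp i) hz)) (qp_ne_zero hq (norm_mul_lt_one (hp i) hw))

lemma continuous_askeyWilsonKernel {X : Type*} [TopologicalSpace X] (hq : ‖q‖ < 1)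
    {p : X → ι → ℂ} {z w : X → ℂ} (hp : Continuous p) (hz : Continuous z) (hw : Continuous w)
    (hp_lt : ∀ x i, ‖p x i‖ < 1) (hz_le : ∀ x, ‖z x‖ ≤ 1) (hw_le : ∀ x, ‖w x‖ ≤ 1) :
    Continuous fun x ↦ askeyWilsonKernel q (p x) (z x) (w x) := by
  have := continuous_qp hq
  exact Continuous.div (by fun_prop) (by fun_prop) fun x ↦
    askeyWilsonKernel_denom_ne_zero hq (hp_lt x) (hz_le x) (hw_le x)

lemma differentiableAt_askeyWilsonKernel (hq : ‖q‖ < 1) (hp : ∀ i, ‖p i‖ < 1) {f g : ℂ → ℂ}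
    {z : ℂ} (hf : DifferentiableAt ℂ f z) (hg : DifferentiableAt ℂ g z) (hf_le : ‖f z‖ ≤ 1)
    (hg_le : ‖g z‖ ≤ 1) : DifferentiableAt ℂ (fun y ↦ askeyWilsonKernel q p (f y) (g y)) z := by
  have := differentiable_qp hq
  exact DifferentiableAt.div (by fun_prop) (by fun_prop)
    (askeyWilsonKernel_denom_ne_zero hq hp hf_le hg_le)

lemma mul_askeyWilsonKernel_mul_right (hq : ‖q‖ < 1) (z : ℂ) {w : ℂ}
    (hpw : ∀ i, ‖p i * w‖ < 1) :
    (1 - w ^ 2) * (1 - q * w ^ 2) * askeyWilsonKernel q p z (q * w) =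
      (∏ i, (1 - p i * w)) * askeyWilsonKernel q p z w := by
  have shift_sq : qp q (w ^ 2) = (1 - w ^ 2) * (1 - q * w ^ 2) * qp q ((q * w) ^ 2) := by
    rw [qp_eq_one_sub_mul hq, qp_eq_one_sub_mul hq (q * w ^ 2)]
    ring_nf
  have shift (i : ι) : qp q (p i * w) = (1 - p i * w) * qp q (p i * (q * w)) := by
    rw [qp_eq_one_sub_mul hq, mul_left_comm q]
  have factor_ne_zero : ∏ i, (1 - p i * w) ≠ 0 :=
    Finset.prod_ne_zero_iff.2 fun i _ ↦ one_sub_ne_zero_of_norm_lt_one (hpw i)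
  simp only [askeyWilsonKernel, shift_sq, shift, Finset.prod_mul_distrib]
  rw [mul_div_assoc', mul_div_assoc', ← mul_div_mul_left _ _ factor_ne_zero]
  congr 1 <;> ring

lemma askeyWilsonKernel_vecCons_mul {n : ℕ} (hq : ‖q‖ < 1) {a z w : ℂ} (p : Fin n → ℂ)
    (haz : ‖a * z‖ < 1) (haw : ‖a * w‖ < 1) :
    askeyWilsonKernel q (Matrix.vecCons (q * a) p) z w =
      (1 - a * z) * (1 - a * w) * askeyWilsonKernel q (Matrix.vecCons a p) z w := by
  have shift (y : ℂ) : qp q (a * y) = (1 - a * y) * qp q (q * a * y) := by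
    rw [qp_eq_one_sub_mul hq, mul_assoc q]
  have factor_ne_zero : (1 - a * z) * (1 - a * w) ≠ 0 :=
    mul_ne_zero (one_sub_ne_zero_of_norm_lt_one haz) (one_sub_ne_zero_of_norm_lt_one haw)
  simp only [askeyWilsonKernel, Fin.prod_univ_succ, Matrix.cons_val_zero, Matrix.cons_val_succ,
    shift]
  rw [mul_div_assoc', ← mul_div_mul_left _ _ factor_ne_zero]
  congr 1
  ring

end Kernel

section ContourShift

open Real (circleAverage)

variable {ι : Type*} [Fintype ι] {q : ℂ} {p : ι → ℂ}

lemma differentiableAt_const_mul_inv_of_norm_le {r z : ℂ} (hr : ‖r‖ ≤ ‖z‖) :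
    DifferentiableAt ℂ (fun y ↦ r * y⁻¹) z := by
  rcases eq_or_ne z 0 with rfl | hz₀
  · obtain rfl : r = 0 := by simpa using hr
    simp
  · fun_prop (disch := exact hz₀)

lemma differentiableAt_askeyWilsonKernel_mul_inv (hq : ‖q‖ < 1) (hp : ∀ i, ‖p i‖ < 1)
    {r z : ℂ} (hr : ‖r‖ ≤ ‖z‖) (hz : ‖z‖ ≤ 1) :
    DifferentiableAt ℂ (fun y ↦ askeyWilsonKernel q p y (r * y⁻¹)) z := by
  refine differentiableAt_askeyWilsonKernel hq hp differentiableAt_id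
    (differentiableAt_const_mul_inv_of_norm_le hr) hz ?_
  rw [norm_mul, norm_inv, ← div_eq_mul_inv]
  exact div_le_one_of_le₀ hr (norm_nonneg z)

lemma continuousOn_inv_unitSphere : ContinuousOn (fun z : ℂ ↦ z⁻¹) (Metric.sphere 0 1) :=
  continuousOn_inv₀.mono fun _ hz ↦ ne_zero_of_mem_unit_sphere ⟨_, hz⟩

lemma continuousOn_askeyWilsonKernel_mul_inv (hq : ‖q‖ < 1) (hp : ∀ i, ‖p i‖ < 1) {r : ℂ}
    (hr : ‖r‖ ≤ 1) :
    ContinuousOn (fun z ↦ askeyWilsonKernel q p z (r * z⁻¹)) (Metric.sphere 0 1) := by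
  intro z hz
  rw [mem_sphere_zero_iff_norm] at hz
  exact (differentiableAt_askeyWilsonKernel_mul_inv hq hp (hz ▸ hr) hz.le).continuousAt
    |>.continuousWithinAt

lemma continuousOn_askeyWilsonKernel_inv (hq : ‖q‖ < 1) (hp : ∀ i, ‖p i‖ < 1) :
    ContinuousOn (fun z ↦ askeyWilsonKernel q p z z⁻¹) (Metric.sphere 0 1) := by
  simpa only [one_mul] using continuousOn_askeyWilsonKernel_mul_inv hq hp norm_one.le

lemma mul_askeyWilsonKernel_comp_mul_inv (q : ℂ) (p : ι → ℂ) {z : ℂ} (hz : z ≠ 0) :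
    q * z⁻¹ * askeyWilsonKernel q p (q * z⁻¹) (q * (q * z⁻¹)⁻¹) =
      q * z⁻¹ * askeyWilsonKernel q p z (q * z⁻¹) := by
  rcases eq_or_ne q 0 with rfl | hq₀
  · simp
  · have involutive : q * (q * z⁻¹)⁻¹ = z := by field_simp
    rw [involutive, askeyWilsonKernel_comm]

/-- The difference `φ(z) - φ(q/z)`, where `φ(z) = z K(z, q/z)` for the Askey–Wilson kernel `K`,
factored by means of the symmetry of `K`. -/
noncomputable def askeyWilsonCoboundary (q : ℂ) (p : ι → ℂ) (z : ℂ) : ℂ :=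
  (z - q * z⁻¹) * askeyWilsonKernel q p z (q * z⁻¹)

lemma continuousOn_askeyWilsonCoboundary (hq : ‖q‖ < 1) (hp : ∀ i, ‖p i‖ < 1) :
    ContinuousOn (askeyWilsonCoboundary q p) (Metric.sphere 0 1) :=
  (continuousOn_id.sub (continuousOn_inv_unitSphere.const_mul q)).mul
    (continuousOn_askeyWilsonKernel_mul_inv hq hp hq.le)

lemma circleAverage_askeyWilsonCoboundary (hq : ‖q‖ < 1) (hp : ∀ i, ‖p i‖ < 1) :
    circleAverage (askeyWilsonCoboundary q p) 0 1 = 0 := by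
  have hK := continuousOn_askeyWilsonKernel_mul_inv hq hp hq.le
  set φ : ℂ → ℂ := fun z ↦ z * askeyWilsonKernel q p z (q * z⁻¹) with hφ
  have equal_radii : circleAverage φ 0 1 = circleAverage φ 0 ‖q‖ :=
    circleAverage_eq_of_differentiableAt_annulus (norm_nonneg q) hq.le fun z hqz hz ↦ by
      rw [sub_zero] at hqz hz
      exact differentiableAt_id.mul (differentiableAt_askeyWilsonKernel_mul_inv hq hp hqz hz)
  have reflected : circleAverage (fun z ↦ q * z⁻¹ * askeyWilsonKernel q p z (q * z⁻¹)) 0 1 =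
      circleAverage φ 0 ‖q‖ := by
    rw [← circleAverage_comp_const_mul_inv φ q]
    refine Real.circleAverage_congr_sphere fun z hz ↦ ?_
    rw [abs_one] at hz
    exact (mul_askeyWilsonKernel_comp_mul_inv q p (ne_zero_of_mem_unit_sphere ⟨z, hz⟩)).symm
  calc circleAverage (askeyWilsonCoboundary q p) 0 1
    _ = circleAverage φ 0 1 -
        circleAverage (fun z ↦ q * z⁻¹ * askeyWilsonKernel q p z (q * z⁻¹)) 0 1 := by
      rw [← Real.circleAverage_fun_sub]
      · simp only [hφ, ← sub_mul]
        rfl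
      · exact (continuousOn_id.mul hK).circleIntegrable zero_le_one
      · exact ((continuousOn_inv_unitSphere.const_mul q).mul hK).circleIntegrable zero_le_one
    _ = 0 := by rw [equal_radii, reflected, sub_self]

lemma one_sub_inv_sq_mul_askeyWilsonCoboundary (hq : ‖q‖ < 1) {z : ℂ} (hz : z ≠ 0)
    (hpz : ∀ i, ‖p i * z⁻¹‖ < 1) :
    (1 - z⁻¹ ^ 2) * askeyWilsonCoboundary q p z =
      z * (∏ i, (1 - p i * z⁻¹)) * askeyWilsonKernel q p z z⁻¹ := by
  have factor : z - q * z⁻¹ = z * (1 - q * z⁻¹ ^ 2) := by field_simp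
  rw [askeyWilsonCoboundary, factor]
  linear_combination z * mul_askeyWilsonKernel_mul_right hq z hpz

end ContourShift

section FourParameters

open Real (circleAverage)

variable {q a b c d : ℂ}

/-- The factor by which the Askey–Wilson weight has to be multiplied to become `G(z) + G(1/z)`,
where `G` is `askeyWilsonCoboundary`. It is affine in `z + z⁻¹ = 2 cos θ`. -/
noncomputable def coboundaryFactor (a b c d z : ℂ) : ℂ :=
  (1 - a * b * c * d) * (z + z⁻¹) -
    (a + b + c + d - (a * b * c + a * b * d + a * c * d + b * c * d))

lemma one_sub_sq_mul_prod_one_sub_add_inv (a b c d : ℂ) {z : ℂ} (hz : z ≠ 0) :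
    z * (1 - z ^ 2) * ((1 - a * z⁻¹) * (1 - b * z⁻¹) * (1 - c * z⁻¹) * (1 - d * z⁻¹)) +
      z⁻¹ * (1 - z⁻¹ ^ 2) * ((1 - a * z) * (1 - b * z) * (1 - c * z) * (1 - d * z)) =
    (1 - z ^ 2) * (1 - z⁻¹ ^ 2) * coboundaryFactor a b c d z := by
  rw [coboundaryFactor]
  field_simp
  ring

lemma askeyWilsonCoboundary_add_inv (hq : ‖q‖ < 1) (ha : ‖a‖ < 1) (hb : ‖b‖ < 1) (hc : ‖c‖ < 1)
    (hd : ‖d‖ < 1) {z : ℂ} (hz : ‖z‖ = 1) :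
    askeyWilsonCoboundary q ![a, b, c, d] z + askeyWilsonCoboundary q ![a, b, c, d] z⁻¹ =
      coboundaryFactor a b c d z * askeyWilsonKernel q ![a, b, c, d] z z⁻¹ := by
  have hz₀ : z ≠ 0 := norm_ne_zero_iff.1 (hz ▸ one_ne_zero)
  have hz_inv : ‖z⁻¹‖ = 1 := by rw [norm_inv, hz, inv_one]
  have hp : ∀ i, ‖![a, b, c, d] i‖ < 1 := by simp [Fin.forall_fin_succ, ha, hb, hc, hd]
  rcases eq_or_ne (z ^ 2) 1 with hsq | hsq
  · have hsq_inv : z⁻¹ ^ 2 = 1 := by rw [inv_pow, hsq, inv_one]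
    simp only [askeyWilsonCoboundary, askeyWilsonKernel_eq_zero_of_sq_eq_one hq _ hsq,
      askeyWilsonKernel_eq_zero_of_sq_eq_one hq _ hsq_inv, mul_zero, add_zero]
  · have hsq_inv : z⁻¹ ^ 2 ≠ 1 := by rwa [inv_pow, ne_eq, inv_eq_one]
    have at_z := one_sub_inv_sq_mul_askeyWilsonCoboundary hq hz₀
      fun i ↦ norm_mul_lt_one (hp i) hz_inv.le
    have at_inv := one_sub_inv_sq_mul_askeyWilsonCoboundary hq (inv_ne_zero hz₀)
      fun i ↦ norm_mul_lt_one (hp i) (by rw [inv_inv, hz])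
    rw [inv_inv, askeyWilsonKernel_comm q _ z⁻¹ z] at at_inv
    simp only [Fin.prod_univ_four, Matrix.cons_val] at at_z at_inv
    apply mul_left_cancel₀
      (mul_ne_zero (sub_ne_zero_of_ne hsq.symm) (sub_ne_zero_of_ne hsq_inv.symm))
    linear_combination (1 - z ^ 2) * at_z + (1 - z⁻¹ ^ 2) * at_inv +
      askeyWilsonKernel q ![a, b, c, d] z z⁻¹ * one_sub_sq_mul_prod_one_sub_add_inv a b c d hz₀

lemma circleAverage_coboundaryFactor_mul_askeyWilsonKernel (hq : ‖q‖ < 1) (ha : ‖a‖ < 1)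
    (hb : ‖b‖ < 1) (hc : ‖c‖ < 1) (hd : ‖d‖ < 1) :
    circleAverage (fun z ↦ coboundaryFactor a b c d z *
      askeyWilsonKernel q ![a, b, c, d] z z⁻¹) 0 1 = 0 := by
  have hp : ∀ i, ‖![a, b, c, d] i‖ < 1 := by simp [Fin.forall_fin_succ, ha, hb, hc, hd]
  have hG := continuousOn_askeyWilsonCoboundary hq hp
  have hG_inv : ContinuousOn (fun z ↦ askeyWilsonCoboundary q ![a, b, c, d] z⁻¹)
      (Metric.sphere 0 1) := hG.comp continuousOn_inv_unitSphere fun z hz ↦ by simpa using hz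
  calc
    _ = circleAverage (fun z ↦ askeyWilsonCoboundary q ![a, b, c, d] z +
          askeyWilsonCoboundary q ![a, b, c, d] z⁻¹) 0 1 :=
      Real.circleAverage_congr_sphere fun z hz ↦
        (askeyWilsonCoboundary_add_inv hq ha hb hc hd (by simpa using hz)).symm
    _ = 0 := by
      rw [Real.circleAverage_fun_add (hG.circleIntegrable zero_le_one)
        (hG_inv.circleIntegrable zero_le_one), Real.circleAverage_zero_one_congr_inv,
        circleAverage_askeyWilsonCoboundary hq hp, add_zero]

/-- The mean of the Askey–Wilson weight over the unit circle, that is `π⁻¹` times the integral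
over `0 ≤ θ ≤ π`. -/
noncomputable def askeyWilsonMean (q a b c d : ℂ) : ℂ :=
  circleAverage (fun z ↦ askeyWilsonKernel q ![a, b, c, d] z z⁻¹) 0 1

lemma askeyWilsonMean_rotate (q a b c d : ℂ) :
    askeyWilsonMean q a b c d = askeyWilsonMean q b c d a := by
  simp only [askeyWilsonMean, askeyWilsonKernel, Fin.prod_univ_four, Matrix.cons_val]
  congr! 3
  ring

lemma one_sub_mul_askeyWilsonKernel_mul_left (hq : ‖q‖ < 1) (ha : ‖a‖ < 1) (b c d : ℂ) {z : ℂ}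
    (hz : ‖z‖ = 1) :
    (1 - a * b * c * d) * askeyWilsonKernel q ![q * a, b, c, d] z z⁻¹ =
      (1 - a * b) * (1 - a * c) * (1 - a * d) * askeyWilsonKernel q ![a, b, c, d] z z⁻¹ -
        a * (coboundaryFactor a b c d z * askeyWilsonKernel q ![a, b, c, d] z z⁻¹) := by
  have mul_inv : z * z⁻¹ = 1 := mul_inv_cancel₀ (norm_ne_zero_iff.1 (hz ▸ one_ne_zero))
  have shift := askeyWilsonKernel_vecCons_mul hq ![b, c, d] (norm_mul_lt_one ha hz.le)
    (norm_mul_lt_one ha (y := z⁻¹) (by rw [norm_inv, hz, inv_one]))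
  rw [shift, coboundaryFactor]
  linear_combination
    (1 - a * b * c * d) * askeyWilsonKernel q ![a, b, c, d] z z⁻¹ * a ^ 2 * mul_inv

lemma one_sub_mul_askeyWilsonMean_mul_left (hq : ‖q‖ < 1) (ha : ‖a‖ < 1) (hb : ‖b‖ < 1)
    (hc : ‖c‖ < 1) (hd : ‖d‖ < 1) :
    (1 - a * b * c * d) * askeyWilsonMean q (q * a) b c d =
      (1 - a * b) * (1 - a * c) * (1 - a * d) * askeyWilsonMean q a b c d := by
  have hK := continuousOn_askeyWilsonKernel_inv (p := ![a, b, c, d]) hq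
    (by simp [Fin.forall_fin_succ, ha, hb, hc, hd])
  have hL : ContinuousOn (coboundaryFactor a b c d) (Metric.sphere 0 1) :=
    ((continuousOn_id.add continuousOn_inv_unitSphere).const_mul _).sub continuousOn_const
  calc (1 - a * b * c * d) • askeyWilsonMean q (q * a) b c d
    _ = circleAverage (fun z ↦
          (1 - a * b * c * d) • askeyWilsonKernel q ![q * a, b, c, d] z z⁻¹) 0 1 :=
      Real.circleAverage_fun_smul.symm
    _ = circleAverage (fun z ↦
          ((1 - a * b) * (1 - a * c) * (1 - a * d)) • askeyWilsonKernel q ![a, b, c, d] z z⁻¹ -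
          a • (coboundaryFactor a b c d z * askeyWilsonKernel q ![a, b, c, d] z z⁻¹)) 0 1 :=
      Real.circleAverage_congr_sphere fun z hz ↦
        one_sub_mul_askeyWilsonKernel_mul_left hq ha b c d (by simpa using hz)
    _ = ((1 - a * b) * (1 - a * c) * (1 - a * d)) • askeyWilsonMean q a b c d := by
      rw [Real.circleAverage_fun_sub, Real.circleAverage_fun_smul (a := a),
        circleAverage_coboundaryFactor_mul_askeyWilsonKernel hq ha hb hc hd, smul_zero, sub_zero,
        Real.circleAverage_fun_smul, askeyWilsonMean]
      · exact (hK.fun_const_smul _).circleIntegrable zero_le_one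
      · exact ((hL.mul hK).fun_const_smul a).circleIntegrable zero_le_one

lemma continuousOn_askeyWilsonMean_left (hq : ‖q‖ < 1) (hb : ‖b‖ < 1) (hc : ‖c‖ < 1)
    (hd : ‖d‖ < 1) :
    ContinuousOn (fun a ↦ askeyWilsonMean q a b c d) (Metric.ball 0 1) := by
  rw [continuousOn_iff_continuous_domRestrict]
  refine (intervalIntegral.continuous_parametric_intervalIntegral_of_continuous' ?_ _ _).const_smul
    (2 * Real.pi)⁻¹
  refine continuous_askeyWilsonKernel (X := Metric.ball (0 : ℂ) 1 × ℝ) hq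
    (p := fun x ↦ ![x.1, b, c, d]) (by fun_prop) (by fun_prop) ?_ ?_ ?_ ?_
  · simp only [circleMap_zero_inv]
    fun_prop
  · rintro ⟨⟨a, ha⟩, θ⟩
    simpa [Fin.forall_fin_succ, hb, hc, hd] using ha
  all_goals simp

end FourParameters

section BaseCase

open Real (circleAverage)

variable {q u : ℂ}

lemma norm_lt_one_of_sq_eq (hq : ‖q‖ < 1) (hu : u ^ 2 = q) : ‖u‖ < 1 := by
  rw [← hu, norm_pow] at hq
  exact lt_of_pow_lt_pow_left₀ 2 zero_le_one (by rwa [one_pow])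

lemma askeyWilsonKernel_self_neg_sqrt_neg_sqrt (hq : ‖q‖ < 1) (hu : u ^ 2 = q) {z w : ℂ}
    (hz : ‖z‖ ≤ 1) (hw : ‖w‖ ≤ 1) :
    askeyWilsonKernel q ![q, -q, u, -u] z w = (1 - z ^ 2) * (1 - w ^ 2) := by
  have cancel (y : ℂ) : qp q (y ^ 2) =
      (1 - y ^ 2) * (qp q (q * y) * qp q (-q * y) * qp q (u * y) * qp q (-u * y)) := by
    rw [qp_sq hq hu, qp_eq_one_sub_mul hq y, qp_eq_one_sub_mul hq (-y), mul_neg, ← neg_mul]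
    ring
  have hu_norm := norm_lt_one_of_sq_eq hq hu
  rw [askeyWilsonKernel, div_eq_iff (askeyWilsonKernel_denom_ne_zero hq
    (by simp [Fin.forall_fin_succ, hq, hu_norm]) hz hw), cancel z, cancel w]
  simp only [Fin.prod_univ_four, Matrix.cons_val]
  ring

lemma circleAverage_one_sub_sq_mul_one_sub_inv_sq :
    circleAverage (fun z ↦ (1 - z ^ 2) * (1 - z⁻¹ ^ 2)) 0 1 = 2 := by
  have sq_average : circleAverage (fun z : ℂ ↦ 1 - z ^ 2) 0 1 = 1 := by
    have : Differentiable ℂ fun z : ℂ ↦ 1 - z ^ 2 := by fun_prop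
    simpa using (this.diffContOnCl (s := Metric.ball 0 |1|)).circleAverage
  have inv_sq_average : circleAverage (fun z : ℂ ↦ 1 - z⁻¹ ^ 2) 0 1 = 1 :=
    (Real.circleAverage_zero_one_congr_inv (f := fun z : ℂ ↦ 1 - z ^ 2)).trans sq_average
  calc
    _ = circleAverage (fun z : ℂ ↦ (1 - z ^ 2) + (1 - z⁻¹ ^ 2)) 0 1 := by
      refine Real.circleAverage_congr_sphere fun z hz ↦ ?_
      have : z ≠ 0 := ne_zero_of_mem_unit_sphere ⟨z, by simpa using hz⟩
      field_simp
      ring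
    _ = 2 := by
      rw [Real.circleAverage_fun_add, sq_average, inv_sq_average, one_add_one_eq_two]
      · exact ContinuousOn.circleIntegrable zero_le_one (by fun_prop)
      · exact (continuousOn_const.sub (continuousOn_inv_unitSphere.pow 2)).circleIntegrable
          zero_le_one

lemma askeyWilsonMean_self_neg_sqrt_neg_sqrt (hq : ‖q‖ < 1) (hu : u ^ 2 = q) :
    askeyWilsonMean q q (-q) u (-u) = 2 := by
  rw [← circleAverage_one_sub_sq_mul_one_sub_inv_sq]
  refine Real.circleAverage_congr_sphere fun z hz ↦ ?_
  have hz_norm : ‖z‖ = 1 := by simpa using hz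
  exact askeyWilsonKernel_self_neg_sqrt_neg_sqrt hq hu hz_norm.le
    (by rw [norm_inv, hz_norm, inv_one])

end BaseCase

section Normalization

variable {q u a b c d : ℂ}

/-- The product of the `q`-shifted factorials of the six pairwise products of four parameters. -/
noncomputable def pairwiseQp (q a b c d : ℂ) : ℂ :=
  qp q (a * b) * qp q (a * c) * qp q (a * d) * qp q (b * c) * qp q (b * d) * qp q (c * d)

lemma pairwiseQp_ne_zero (hq : ‖q‖ < 1) (ha : ‖a‖ < 1) (hb : ‖b‖ < 1) (hc : ‖c‖ < 1)
    (hd : ‖d‖ < 1) : pairwiseQp q a b c d ≠ 0 := by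
  have pair {x y : ℂ} (hx : ‖x‖ < 1) (hy : ‖y‖ < 1) : qp q (x * y) ≠ 0 :=
    qp_ne_zero hq (norm_mul_lt_one hx hy.le)
  simp only [pairwiseQp, ne_eq, mul_eq_zero, pair ha hb, pair ha hc, pair ha hd, pair hb hc,
    pair hb hd, pair hc hd, or_self, not_false_eq_true]

lemma qp_mul_mul_mul_ne_zero (hq : ‖q‖ < 1) (ha : ‖a‖ < 1) (hb : ‖b‖ < 1) (hc : ‖c‖ < 1)
    (hd : ‖d‖ < 1) : qp q (a * b * c * d) ≠ 0 :=
  qp_ne_zero hq (norm_mul_lt_one (norm_mul_lt_one (norm_mul_lt_one ha hb.le) hc.le) hd.le)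

lemma qp_self_mul_pairwiseQp_self_neg_sqrt_neg_sqrt (hq : ‖q‖ < 1) (hu : u ^ 2 = q) :
    qp q q * pairwiseQp q q (-q) u (-u) = qp q (q * -q * u * -u) := by
  have unit : (1 - q) * qp q (q * u) * qp q (q * -u) * qp q (-q) = 1 := by
    have h := qp_mul_qp_neg_mul_qp_neg_sq hq hu
    rw [qp_eq_one_sub_mul hq u, qp_eq_one_sub_mul hq (-u)] at h
    linear_combination h - qp q (q * u) * qp q (q * -u) * qp q (-q) * -hu
  have neg : qp q (-q) = (1 + q) * qp q (q * -q) := by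
    rw [qp_eq_one_sub_mul hq, sub_neg_eq_add]
  have fourfold : q * -q * u * -u = q * (q * q) := by linear_combination q ^ 2 * hu
  have twofold : u * -u = -q := by linear_combination -hu
  rw [fourfold, pairwiseQp, twofold, neg_mul_neg, neg_mul, ← mul_neg q u,
    qp_eq_one_sub_mul hq q, qp_eq_one_sub_mul hq (q * q)]
  linear_combination qp q (q * (q * q)) *
    (((1 - q) * qp q (q * u) * qp q (q * -u) * qp q (-q) + 1) * unit -
      (1 - q) ^ 2 * (qp q (q * u) * qp q (q * -u)) ^ 2 * qp q (-q) * neg)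

/-- The Askey–Wilson mean divided by the quotient of `q`-shifted factorials through which it depends
on the parameters. It is the quantity invariant under `a ↦ q a`. -/
noncomputable def normalizedAskeyWilsonMean (q a b c d : ℂ) : ℂ :=
  askeyWilsonMean q a b c d * pairwiseQp q a b c d / qp q (a * b * c * d)

lemma normalizedAskeyWilsonMean_rotate (q a b c d : ℂ) :
    normalizedAskeyWilsonMean q a b c d = normalizedAskeyWilsonMean q b c d a := by
  simp only [normalizedAskeyWilsonMean, pairwiseQp, askeyWilsonMean_rotate q a b c d,
    mul_comm a, mul_assoc]
  congr 1
  ring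

lemma normalizedAskeyWilsonMean_mul_left (hq : ‖q‖ < 1) (ha : ‖a‖ < 1) (hb : ‖b‖ < 1)
    (hc : ‖c‖ < 1) (hd : ‖d‖ < 1) :
    normalizedAskeyWilsonMean q (q * a) b c d = normalizedAskeyWilsonMean q a b c d := by
  have recurrence := one_sub_mul_askeyWilsonMean_mul_left hq ha hb hc hd
  have ne_zero := qp_mul_mul_mul_ne_zero hq ha hb hc hd
  rw [qp_eq_one_sub_mul hq] at ne_zero
  simp only [normalizedAskeyWilsonMean, pairwiseQp, mul_assoc q]
  rw [qp_eq_one_sub_mul hq (a * b * c * d), qp_eq_one_sub_mul hq (a * b),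
    qp_eq_one_sub_mul hq (a * c), qp_eq_one_sub_mul hq (a * d),
    div_eq_div_iff (right_ne_zero_of_mul ne_zero) ne_zero]
  linear_combination qp q (q * (a * b)) * qp q (q * (a * c)) * qp q (q * (a * d)) *
    qp q (b * c) * qp q (b * d) * qp q (c * d) * qp q (q * (a * b * c * d)) * recurrence

lemma normalizedAskeyWilsonMean_pow_mul_left (hq : ‖q‖ < 1) (ha : ‖a‖ < 1) (hb : ‖b‖ < 1)
    (hc : ‖c‖ < 1) (hd : ‖d‖ < 1) (n : ℕ) :
    normalizedAskeyWilsonMean q (q ^ n * a) b c d = normalizedAskeyWilsonMean q a b c d := by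
  induction n generalizing a with
  | zero => rw [pow_zero, one_mul]
  | succ n ih =>
    rw [pow_succ, mul_assoc, ih (norm_mul_lt_one hq ha.le),
      normalizedAskeyWilsonMean_mul_left hq ha hb hc hd]

lemma continuousOn_normalizedAskeyWilsonMean_left (hq : ‖q‖ < 1) (hb : ‖b‖ < 1) (hc : ‖c‖ < 1)
    (hd : ‖d‖ < 1) :
    ContinuousOn (fun a ↦ normalizedAskeyWilsonMean q a b c d) (Metric.ball 0 1) := by
  have := continuous_qp hq
  refine ((continuousOn_askeyWilsonMean_left hq hb hc hd).mul ?_).div (by fun_prop) fun a ha ↦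
    qp_mul_mul_mul_ne_zero hq (mem_ball_zero_iff.1 ha) hb hc hd
  unfold pairwiseQp
  fun_prop

lemma normalizedAskeyWilsonMean_zero_left (hq : ‖q‖ < 1) (ha : ‖a‖ < 1) (hb : ‖b‖ < 1)
    (hc : ‖c‖ < 1) (hd : ‖d‖ < 1) :
    normalizedAskeyWilsonMean q 0 b c d = normalizedAskeyWilsonMean q a b c d := by
  have continuousAt_zero := (continuousOn_normalizedAskeyWilsonMean_left hq hb hc hd).continuousAt
    (Metric.ball_mem_nhds 0 one_pos)
  have tendsto_zero : Filter.Tendsto (fun n : ℕ ↦ q ^ n * a) Filter.atTop (nhds 0) := by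
    simpa using (tendsto_pow_atTop_nhds_zero_of_norm_lt_one hq).mul_const a
  refine tendsto_nhds_unique (continuousAt_zero.tendsto.comp tendsto_zero) ?_
  simp only [Function.comp_def, normalizedAskeyWilsonMean_pow_mul_left hq ha hb hc hd]
  exact tendsto_const_nhds

lemma normalizedAskeyWilsonMean_eq_at_zero (hq : ‖q‖ < 1) (ha : ‖a‖ < 1) (hb : ‖b‖ < 1)
    (hc : ‖c‖ < 1) (hd : ‖d‖ < 1) :
    normalizedAskeyWilsonMean q a b c d = normalizedAskeyWilsonMean q 0 0 0 0 := by
  have h₀ : ‖(0 : ℂ)‖ < 1 := by simp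
  rw [← normalizedAskeyWilsonMean_zero_left hq ha hb hc hd, normalizedAskeyWilsonMean_rotate,
    ← normalizedAskeyWilsonMean_zero_left hq hb hc hd h₀, normalizedAskeyWilsonMean_rotate,
    ← normalizedAskeyWilsonMean_zero_left hq hc hd h₀ h₀, normalizedAskeyWilsonMean_rotate,
    ← normalizedAskeyWilsonMean_zero_left hq hd h₀ h₀ h₀]

lemma normalizedAskeyWilsonMean_self_neg_sqrt_neg_sqrt (hq : ‖q‖ < 1) (hu : u ^ 2 = q) :
    normalizedAskeyWilsonMean q q (-q) u (-u) = 2 / qp q q := by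
  have hu_norm := norm_lt_one_of_sq_eq hq hu
  have pairwise_ne_zero : pairwiseQp q q (-q) u (-u) ≠ 0 :=
    pairwiseQp_ne_zero hq hq (by rwa [norm_neg]) hu_norm (by rwa [norm_neg])
  rw [normalizedAskeyWilsonMean, askeyWilsonMean_self_neg_sqrt_neg_sqrt hq hu,
    ← qp_self_mul_pairwiseQp_self_neg_sqrt_neg_sqrt hq hu,
    mul_div_mul_right _ _ pairwise_ne_zero]

lemma askeyWilsonMean_eq (hq : ‖q‖ < 1) (ha : ‖a‖ < 1) (hb : ‖b‖ < 1) (hc : ‖c‖ < 1)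
    (hd : ‖d‖ < 1) :
    askeyWilsonMean q a b c d =
      2 * qp q (a * b * c * d) / (qp q q * pairwiseQp q a b c d) := by
  obtain ⟨u, hu⟩ := IsAlgClosed.exists_pow_nat_eq q two_pos
  have hu_norm := norm_lt_one_of_sq_eq hq hu
  have eq_base : normalizedAskeyWilsonMean q a b c d = 2 / qp q q := by
    rw [normalizedAskeyWilsonMean_eq_at_zero hq ha hb hc hd,
      ← normalizedAskeyWilsonMean_self_neg_sqrt_neg_sqrt hq hu]
    exact (normalizedAskeyWilsonMean_eq_at_zero hq hq (by rwa [norm_neg]) hu_norm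
      (by rwa [norm_neg])).symm
  rw [normalizedAskeyWilsonMean, div_eq_div_iff (qp_mul_mul_mul_ne_zero hq ha hb hc hd)
    (qp_ne_zero hq hq)] at eq_base
  rw [eq_div_iff (mul_ne_zero (qp_ne_zero hq hq) (pairwiseQp_ne_zero hq ha hb hc hd))]
  linear_combination eq_base

end Normalization

section Weight

variable {q u a b c d : ℂ}

lemma hh_eq_qp_circleMap (q : ℂ) (θ : ℝ) (l : ℂ) :
    hh q θ l = qp q (l * circleMap 0 1 θ) * qp q (l * (circleMap 0 1 θ)⁻¹) := by
  simp [hh, circleMap, Complex.exp_neg]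

lemma hh_quotient_eq_askeyWilsonKernel (hq : ‖q‖ < 1) (hu : u ^ 2 = q) (a b c d : ℂ) (θ : ℝ) :
    (hh q θ 1 * hh q θ (-1) * hh q θ u * hh q θ (-u)) /
        (hh q θ a * hh q θ b * hh q θ c * hh q θ d) =
      askeyWilsonKernel q ![a, b, c, d] (circleMap 0 1 θ) (circleMap 0 1 θ)⁻¹ := by
  simp only [hh_eq_qp_circleMap, askeyWilsonKernel, qp_sq hq hu, Fin.prod_univ_four,
    Matrix.cons_val, one_mul, neg_one_mul]
  congr 1
  ring

lemma integral_askeyWilsonKernel_eq_pi_mul_askeyWilsonMean (hq : ‖q‖ < 1) (ha : ‖a‖ < 1)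
    (hb : ‖b‖ < 1) (hc : ‖c‖ < 1) (hd : ‖d‖ < 1) :
    ∫ θ in (0 : ℝ)..Real.pi,
        askeyWilsonKernel q ![a, b, c, d] (circleMap 0 1 θ) (circleMap 0 1 θ)⁻¹ =
      Real.pi * askeyWilsonMean q a b c d := by
  rw [← real_smul]
  refine integral_zero_pi_circleMap_eq_smul_circleAverage
    (f := fun z ↦ askeyWilsonKernel q ![a, b, c, d] z z⁻¹) ?_ fun z ↦ ?_
  · exact (continuousOn_askeyWilsonKernel_inv hq
      (by simp [Fin.forall_fin_succ, ha, hb, hc, hd])).circleIntegrable zero_le_one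
  · rw [inv_inv, askeyWilsonKernel_comm]

end Weight

/-- The Askey–Wilson integral. -/
theorem askey_wilson_integral (q u a b c d : ℂ) (hq : ‖q‖ < 1) (hu : u ^ 2 = q)
    (ha : ‖a‖ < 1) (hb : ‖b‖ < 1) (hc : ‖c‖ < 1) (hd : ‖d‖ < 1) :
    ∫ θ in (0:ℝ)..Real.pi,
      (hh q θ 1 * hh q θ (-1) * hh q θ u * hh q θ (-u)) /
        (hh q θ a * hh q θ b * hh q θ c * hh q θ d)
      = 2 * (Real.pi : ℂ) * qp q (a * b * c * d) /
        (qp q q * qp q (a * b) * qp q (a * c) * qp q (a * d) *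
          qp q (b * c) * qp q (b * d) * qp q (c * d)) := by
  simp only [hh_quotient_eq_askeyWilsonKernel hq hu]
  rw [integral_askeyWilsonKernel_eq_pi_mul_askeyWilsonMean hq ha hb hc hd,
    askeyWilsonMean_eq hq ha hb hc hd, pairwiseQp]
  ring
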